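/- Let G=(V,E) be a finite connected graph with normalized adjacency eigenvalues μ_n ≤ μ_{n-1} ≤ … ≤ μ_2 ≤ μ_1 = 1 and edge-expansion h, and suppose 1 + μ_{n-1} < (1 − μ_2)/2. Then (√2/2)·h ≤ (√(1+μ_n) + √(1+μ_{n-1})) / ( √(1 − (1+μ_n)/(1−μ_2)) · √(1 − (1+μ_{n-1})/(1−μ_2)) − √((1+μ_n)/(1−μ_2)) · √((1+μ_{n-1})/(1−μ_2)) ). -/

import Mathlib

open Finset Polynomial

noncomputable section
open scoped Classical

/-- The normalized adjacency matrix `D⁻¹A` of a finite graph. -/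
def normAdj {V : Type*} [Fintype V] (G : SimpleGraph V) : Matrix V V ℝ :=
  Matrix.of fun u v => if G.Adj u v then ((G.degree u : ℝ))⁻¹ else 0

/-- The volume of a vertex subset: the sum of the degrees of its vertices. -/
def vol {V : Type*} [Fintype V] (G : SimpleGraph V) (S : Finset V) : ℝ :=
  ∑ u ∈ S, (G.degree u : ℝ)

/-- The number of boundary edges of a vertex subset, i.e. edges with exactly one
endpoint in `S`. -/
def bdry {V : Type*} [Fintype V] (G : SimpleGraph V) (S : Finset V) : ℝ :=
  ∑ u ∈ S, ∑ v ∈ Sᶜ, if G.Adj u v then (1 : ℝ) else 0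

/-- The edge-expansion (Cheeger constant)
`h = min_{∅ ≠ S ⊊ V} |∂S| / min(vol S, vol Sᶜ)`. -/
def cheeger {V : Type*} [Fintype V] (G : SimpleGraph V) : ℝ :=
  sInf { x : ℝ | ∃ S : Finset V, S.Nonempty ∧ S ≠ Finset.univ ∧
    x = bdry G S / min (vol G S) (vol G Sᶜ) }

section WeightedSums

variable {V ι : Type*} [Fintype V] [Fintype ι]

lemma sum_weight_mul_abs_mul_le (w F H : ι → ℝ) (hw : ∀ i, 0 ≤ w i) :
    ∑ i, w i * |F i * H i| ≤ √(∑ i, w i * F i ^ 2) * √(∑ i, w i * H i ^ 2) := by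
  have h := Real.sum_mul_le_sqrt_mul_sqrt univ (fun i => √(w i) * |F i|) (fun i => √(w i) * |H i|)
  simp only [mul_pow, Real.sq_sqrt (hw _), sq_abs] at h
  refine le_trans (le_of_eq (Finset.sum_congr rfl fun i _ => ?_)) h
  rw [abs_mul, mul_mul_mul_comm, Real.mul_self_sqrt (hw i)]

lemma sum_sum_weight_mul_abs_mul_le (a F H : V → V → ℝ) (ha : ∀ x y, 0 ≤ a x y) :
    ∑ x, ∑ y, a x y * |F x y * H x y| ≤
      √(∑ x, ∑ y, a x y * F x y ^ 2) * √(∑ x, ∑ y, a x y * H x y ^ 2) := by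
  simpa only [Fintype.sum_prod_type] using sum_weight_mul_abs_mul_le
    (fun p : V × V => a p.1 p.2) (fun p => F p.1 p.2) (fun p => H p.1 p.2) fun p => ha p.1 p.2

lemma sum_sum_weight_mul_add_sq (a : V → V → ℝ) (d u : V → ℝ) (hsymm : ∀ x y, a x y = a y x)
    (hd : ∀ x, ∑ y, a x y = d x) (c : ℝ) :
    ∑ x, ∑ y, a x y * (u x + c * u y) ^ 2 =
      (1 + c ^ 2) * ∑ x, d x * u x ^ 2 + 2 * c * ∑ x, u x * ∑ y, a x y * u y := by
  have h1 : ∑ x, ∑ y, a x y * u x ^ 2 = ∑ x, d x * u x ^ 2 := by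
    simp_rw [← Finset.sum_mul, hd]
  have h2 : ∑ x, ∑ y, a x y * u y ^ 2 = ∑ x, d x * u x ^ 2 := by
    rw [Finset.sum_comm]
    simp_rw [fun x y => hsymm y x, ← Finset.sum_mul, hd]
  calc ∑ x, ∑ y, a x y * (u x + c * u y) ^ 2
      = ∑ x, ∑ y, (a x y * u x ^ 2 + c ^ 2 * (a x y * u y ^ 2)
          + 2 * c * (u x * (a x y * u y))) := by
        refine Finset.sum_congr rfl fun x _ => Finset.sum_congr rfl fun y _ => by ring
    _ = _ := by
        simp only [Finset.sum_add_distrib, ← Finset.mul_sum, h1, h2]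
        ring

/-- An orthonormal basis of `ℓ²(d)` of eigenfunctions of `D⁻¹a`, with eigenvalues `μ`. -/
structure IsEigenbasis (a : V → V → ℝ) (d : V → ℝ) (μ : ι → ℝ) (φ : ι → V → ℝ) : Prop where
  eigen : ∀ i x, ∑ y, a x y * φ i y = μ i * (d x * φ i x)
  norm : ∀ i, ∑ x, d x * φ i x ^ 2 = 1
  orthogonal : ∀ i j, i ≠ j → ∑ x, d x * (φ i x * φ j x) = 0
  parseval : ∀ u v : V → ℝ, ∑ x, d x * (u x * v x) =
    ∑ i, (∑ x, d x * (u x * φ i x)) * ∑ x, d x * (v x * φ i x)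

namespace IsEigenbasis

variable {a : V → V → ℝ} {d : V → ℝ} {μ : ι → ℝ} {φ : ι → V → ℝ}

lemma sum_adj_mul (h : IsEigenbasis a d μ φ) (hsymm : ∀ x y, a x y = a y x) (u : V → ℝ) (i : ι) :
    ∑ x, (∑ y, a x y * u y) * φ i x = μ i * ∑ x, d x * (u x * φ i x) := by
  calc ∑ x, (∑ y, a x y * u y) * φ i x = ∑ y, u y * ∑ x, a y x * φ i x := by
        simp_rw [Finset.sum_mul, Finset.mul_sum]
        rw [Finset.sum_comm]
        refine Finset.sum_congr rfl fun y _ => Finset.sum_congr rfl fun x _ => ?_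
        rw [hsymm x y]; ring
    _ = _ := by
        simp_rw [h.eigen, Finset.mul_sum]
        exact Finset.sum_congr rfl fun y _ => by ring

lemma energy (h : IsEigenbasis a d μ φ) (hsymm : ∀ x y, a x y = a y x)
    (hd : ∀ x, ∑ y, a x y = d x) (c : ℝ) (i : ι) :
    ∑ x, ∑ y, a x y * (φ i x + c * φ i y) ^ 2 = 1 + c ^ 2 + 2 * c * μ i := by
  rw [sum_sum_weight_mul_add_sq a d _ hsymm hd, h.norm]
  simp_rw [h.eigen]
  have : ∑ x, φ i x * (μ i * (d x * φ i x)) = μ i * ∑ x, d x * φ i x ^ 2 := by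
    rw [Finset.mul_sum]
    exact Finset.sum_congr rfl fun x _ => by ring
  rw [this, h.norm]
  ring

lemma one_add_nonneg (h : IsEigenbasis a d μ φ) (ha : ∀ x y, 0 ≤ a x y)
    (hsymm : ∀ x y, a x y = a y x) (hd : ∀ x, ∑ y, a x y = d x) (i : ι) : 0 ≤ 1 + μ i := by
  have h1 := h.energy hsymm hd 1 i
  have : 0 ≤ ∑ x, ∑ y, a x y * (φ i x + 1 * φ i y) ^ 2 :=
    Finset.sum_nonneg fun x _ => Finset.sum_nonneg fun y _ => mul_nonneg (ha x y) (sq_nonneg _)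
  linarith

/-- Poincaré inequality: the variance is controlled by the Dirichlet energy. -/
lemma poincare (h : IsEigenbasis a d μ φ) (hsymm : ∀ x y, a x y = a y x)
    (hd : ∀ x, ∑ y, a x y = d x) (hpos : ∀ x, 0 < d x) {i₀ : ι} {m : ℝ} (hμ₀ : μ i₀ = 1)
    (hm : ∀ i, i ≠ i₀ → μ i ≤ m) (hm1 : m < 1) (u : V → ℝ) :
    (1 - m) * (∑ x, d x * u x ^ 2 - (∑ x, d x * u x) ^ 2 / ∑ x, d x) ≤
      ∑ x, d x * u x ^ 2 - ∑ x, u x * ∑ y, a x y * u y := by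
  set c : ι → ℝ := fun i => ∑ x, d x * (u x * φ i x) with hc
  have hone : ∀ i, i ≠ i₀ → ∑ x, d x * (1 * φ i x) = 0 := by
    intro i hi
    have h1 := h.sum_adj_mul hsymm (fun _ => 1) i
    simp only [mul_one, one_mul, hd] at h1 ⊢
    have h2 : (1 - μ i) * ∑ x, d x * φ i x = 0 := by linarith
    rcases mul_eq_zero.1 h2 with h3 | h3
    · linarith [hm i hi]
    · exact h3
  set e := ∑ x, d x * (1 * φ i₀ x) with he
  have hW : ∑ x, d x = e * e := by
    have h1 := h.parseval (fun _ => 1) (fun _ => 1)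
    rw [Finset.sum_eq_single i₀ (fun i _ hi => by rw [hone i hi, zero_mul])
      (fun hh => absurd (Finset.mem_univ _) hh)] at h1
    simpa [he] using h1
  have hu1 : ∑ x, d x * u x = c i₀ * e := by
    have h1 := h.parseval u (fun _ => 1)
    rw [Finset.sum_eq_single i₀ (fun i _ hi => by rw [hone i hi, mul_zero])
      (fun hh => absurd (Finset.mem_univ _) hh)] at h1
    simpa [he, hc] using h1
  have hsq : ∑ x, d x * u x ^ 2 = ∑ i, c i ^ 2 := by
    simp_rw [sq]
    exact h.parseval u u
  have hform : ∑ x, u x * ∑ y, a x y * u y = ∑ i, μ i * c i ^ 2 := by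
    have h1 := h.parseval u (fun x => (d x)⁻¹ * ∑ y, a x y * u y)
    have h2 : ∀ x, d x * (u x * ((d x)⁻¹ * ∑ y, a x y * u y)) = u x * ∑ y, a x y * u y := by
      intro x
      have := (hpos x).ne'
      field_simp
    have h3 : ∀ i x, d x * ((d x)⁻¹ * (∑ y, a x y * u y) * φ i x)
        = (∑ y, a x y * u y) * φ i x := by
      intro i x
      have := (hpos x).ne'
      field_simp
    simp_rw [h2, h3, h.sum_adj_mul hsymm] at h1
    rw [h1]
    exact Finset.sum_congr rfl fun i _ => by ring
  have hdiv : (∑ x, d x * u x) ^ 2 / ∑ x, d x = c i₀ ^ 2 := by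
    have hne : e ≠ 0 := by
      rintro h0
      have hall : ∀ x, d x = 0 := by
        rw [h0, mul_zero, Finset.sum_eq_zero_iff_of_nonneg fun x _ => (hpos x).le] at hW
        exact fun x => hW x (Finset.mem_univ x)
      have := h.norm i₀
      simp [hall] at this
    rw [hu1, hW]
    field_simp
  rw [hdiv, hsq, hform, ← Finset.sum_sub_distrib,
    ← Finset.add_sum_erase _ _ (Finset.mem_univ i₀), ← Finset.add_sum_erase _ _ (Finset.mem_univ i₀),
    hμ₀, add_sub_cancel_left, one_mul, sub_self, zero_add, Finset.mul_sum]
  refine Finset.sum_le_sum fun i hi => ?_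
  nlinarith [hm i (Finset.ne_of_mem_erase hi), sq_nonneg (c i)]

/-- The modulus of an eigenfunction has small variance when the eigenvalue is close to `-1`. -/
lemma variance_abs_le (h : IsEigenbasis a d μ φ) (ha : ∀ x y, 0 ≤ a x y)
    (hsymm : ∀ x y, a x y = a y x) (hd : ∀ x, ∑ y, a x y = d x) (hpos : ∀ x, 0 < d x)
    {i₀ : ι} {m : ℝ} (hμ₀ : μ i₀ = 1) (hm : ∀ i, i ≠ i₀ → μ i ≤ m) (hm1 : m < 1) (i : ι) :
    1 - (∑ x, d x * |φ i x|) ^ 2 / ∑ x, d x ≤ (1 + μ i) / (1 - m) := by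
  have h1 := h.poincare hsymm hd hpos hμ₀ hm hm1 (fun x => |φ i x|)
  have h2 := sum_sum_weight_mul_add_sq a d (fun x => |φ i x|) hsymm hd (-1)
  have h3 := h.energy hsymm hd 1 i
  simp only [sq_abs, h.norm] at h1 h2
  have h4 : ∑ x, ∑ y, a x y * (|φ i x| + -1 * |φ i y|) ^ 2 ≤
      ∑ x, ∑ y, a x y * (φ i x + 1 * φ i y) ^ 2 := by
    refine Finset.sum_le_sum fun x _ => Finset.sum_le_sum fun y _ =>
      mul_le_mul_of_nonneg_left (sq_le_sq.2 ?_) (ha x y)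
    have := abs_abs_sub_abs_le_abs_sub (φ i x) (-φ i y)
    rw [abs_neg, sub_neg_eq_add] at this
    simpa [← sub_eq_add_neg] using this
  rw [le_div_iff₀ (by linarith)]
  linarith

end IsEigenbasis

/-- Two nonnegative unit functions of small variance have a large inner product. -/
lemma le_sum_mul_of_variance_le {d p q : V → ℝ} {s t : ℝ} (hd : ∀ x, 0 < d x)
    (hp : ∀ x, 0 ≤ p x) (hq : ∀ x, 0 ≤ q x) (hp1 : ∑ x, d x * p x ^ 2 = 1)
    (hq1 : ∑ x, d x * q x ^ 2 = 1) (hs : 1 - (∑ x, d x * p x) ^ 2 / ∑ x, d x ≤ s)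
    (ht : 1 - (∑ x, d x * q x) ^ 2 / ∑ x, d x ≤ t) :
    √(1 - s) * √(1 - t) - √s * √t ≤ ∑ x, d x * (p x * q x) := by
  set W := ∑ x, d x with hW
  have hW0 : 0 < W := by
    refine lt_of_le_of_ne (Finset.sum_nonneg fun x _ => (hd x).le) fun h0 => ?_
    have hall := (Finset.sum_eq_zero_iff_of_nonneg fun x _ => (hd x).le).1 h0.symm
    rw [Finset.sum_eq_zero fun x hx => by rw [hall x hx, zero_mul]] at hp1
    exact zero_ne_one hp1
  set P := ∑ x, d x * p x with hP
  set Q := ∑ x, d x * q x with hQ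
  have hP0 : 0 ≤ P := Finset.sum_nonneg fun x _ => mul_nonneg (hd x).le (hp x)
  have hQ0 : 0 ≤ Q := Finset.sum_nonneg fun x _ => mul_nonneg (hd x).le (hq x)
  have key : ∀ v w : V → ℝ, ∑ x, d x * ((v x - (∑ z, d z * v z) / W) *
      (w x - (∑ z, d z * w z) / W)) = ∑ x, d x * (v x * w x) -
        (∑ z, d z * v z) * (∑ z, d z * w z) / W := by
    intro v w
    have : ∀ x, d x * ((v x - (∑ z, d z * v z) / W) * (w x - (∑ z, d z * w z) / W)) =
        d x * (v x * w x) - (∑ z, d z * w z) / W * (d x * v x)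
          - (∑ z, d z * v z) / W * (d x * w x)
          + (∑ z, d z * v z) / W * ((∑ z, d z * w z) / W) * d x := fun x => by ring
    simp_rw [this, Finset.sum_add_distrib, Finset.sum_sub_distrib, ← Finset.mul_sum, ← hW]
    field_simp
    ring
  have hcs := sum_weight_mul_abs_mul_le d (fun x => p x - P / W) (fun x => q x - Q / W)
    fun x => (hd x).le
  simp only [sq (_ - _)] at hcs
  simp only [hP, hQ, key] at hcs
  simp only [← hP, ← hQ, ← sq, hp1, hq1] at hcs
  have hlow : -(∑ x, d x * |(p x - P / W) * (q x - Q / W)|) ≤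
      ∑ x, d x * ((p x - P / W) * (q x - Q / W)) := by
    rw [← Finset.sum_neg_distrib]
    refine Finset.sum_le_sum fun x _ => ?_
    rw [← mul_neg]
    exact mul_le_mul_of_nonneg_left (neg_abs_le _) (hd x).le
  rw [hP, hQ, key p q, ← hP, ← hQ] at hlow
  have h1 : √(1 - P ^ 2 / W) * √(1 - Q ^ 2 / W) ≤ √s * √t :=
    mul_le_mul (Real.sqrt_le_sqrt hs) (Real.sqrt_le_sqrt ht) (Real.sqrt_nonneg _)
      (Real.sqrt_nonneg _)
  have h2 : √(1 - s) * √(1 - t) ≤ P * Q / W := by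
    calc √(1 - s) * √(1 - t) ≤ √(P ^ 2 / W) * √(Q ^ 2 / W) :=
          mul_le_mul (Real.sqrt_le_sqrt (by linarith)) (Real.sqrt_le_sqrt (by linarith))
            (Real.sqrt_nonneg _) (Real.sqrt_nonneg _)
      _ = P * Q / W := by
          rw [Real.sqrt_div (sq_nonneg P), Real.sqrt_div (sq_nonneg Q), Real.sqrt_sq hP0,
            Real.sqrt_sq hQ0, div_mul_div_comm, Real.mul_self_sqrt hW0.le]
  linarith

end WeightedSums

section Spectral

variable {V : Type*} [Fintype V]

lemma antitone_eq_of_prod_X_sub_C_eq {n : ℕ} {f g : Fin n → ℝ} (hf : Antitone f) (hg : Antitone g)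
    (h : ∏ i, (X - C (f i)) = ∏ i, (X - C (g i))) : f = g := by
  have hroots : ∀ u : Fin n → ℝ, (∏ i, (X - C (u i))).roots = (List.ofFn u : Multiset ℝ) := by
    intro u
    rw [← Fin.univ_val_map, ← roots_multiset_prod_X_sub_C (Multiset.map u _), Multiset.map_map]
    rfl
  have h1 := congrArg Polynomial.roots h
  rw [hroots, hroots, Multiset.coe_eq_coe] at h1
  exact List.ofFn_injective (h1.eq_of_sortedGE hf.sortedGE_ofFn hg.sortedGE_ofFn)

/-- A real symmetric matrix whose characteristic polynomial has the roots `μ` has an orthonormal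
eigenbasis with these eigenvalues. -/
lemma exists_orthonormalBasis_of_charpoly {M : Matrix V V ℝ} (hM : M.IsHermitian)
    {μ : Fin (Fintype.card V) → ℝ} (hanti : Antitone μ) (hchar : M.charpoly = ∏ i, (X - C (μ i))) :
    ∃ b : OrthonormalBasis (Fin (Fintype.card V)) ℝ (EuclideanSpace ℝ V),
      ∀ i x, ∑ y, M x y * b i y = μ i * b i x := by
  let e : Fin (Fintype.card V) ≃ V := Fintype.equivOfCardEq (Fintype.card_fin _)
  have hμ : μ = hM.eigenvalues₀ := by
    refine antitone_eq_of_prod_X_sub_C_eq hanti hM.eigenvalues₀_antitone ?_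
    rw [← hchar, hM.charpoly_eq]
    exact (Equiv.prod_comp e.symm fun i => X - C (hM.eigenvalues₀ i))
  refine ⟨hM.eigenvectorBasis.reindex e.symm, fun i x => ?_⟩
  have h1 := congrFun (hM.mulVec_eigenvectorBasis (e i)) x
  have h2 : hM.eigenvalues (e i) = μ i := by
    rw [hμ]
    exact congrArg hM.eigenvalues₀ (e.symm_apply_apply i)
  rw [h2] at h1
  simpa [Matrix.mulVec, dotProduct] using h1

lemma exists_isEigenbasis (G : SimpleGraph V) (hpos : ∀ x, 0 < (G.degree x : ℝ))
    {μ : Fin (Fintype.card V) → ℝ} (hanti : Antitone μ)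
    (hchar : (normAdj G).charpoly = ∏ i, (X - C (μ i))) :
    ∃ φ, IsEigenbasis (G.adjMatrix ℝ) (fun x => (G.degree x : ℝ)) μ φ := by
  set r : V → ℝ := fun x => √(G.degree x : ℝ) with hr
  have hr0 : ∀ x, r x ≠ 0 := fun x => (Real.sqrt_pos.2 (hpos x)).ne'
  have hrr : ∀ x, (G.degree x : ℝ) = r x * r x := fun x => (Real.mul_self_sqrt (hpos x).le).symm
  set M : Matrix V V ℝ := Matrix.of fun x y => (r x)⁻¹ * G.adjMatrix ℝ x y * (r y)⁻¹ with hMdef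
  have hM : M.IsHermitian := by
    ext x y
    simp only [hMdef, Matrix.conjTranspose_apply, Matrix.of_apply, star_trivial,
      SimpleGraph.adjMatrix_apply, G.adj_comm y x]
    ring
  have hN : normAdj G = Matrix.diagonal (fun x => (r x)⁻¹) * (M * Matrix.diagonal r) := by
    ext x y
    rw [Matrix.diagonal_mul, Matrix.mul_diagonal]
    simp only [normAdj, hMdef, Matrix.of_apply, SimpleGraph.adjMatrix_apply, hrr x]
    have := hr0 x
    have := hr0 y
    split_ifs
    · field_simp
    · simp
  have hMchar : M.charpoly = ∏ i, (X - C (μ i)) := by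
    rw [← hchar, hN, Matrix.charpoly_mul_comm, mul_assoc, Matrix.diagonal_mul_diagonal]
    simp [hr0]
  obtain ⟨b, hb⟩ := exists_orthonormalBasis_of_charpoly hM hanti hMchar
  have hinner : ∀ v w : EuclideanSpace ℝ V, inner ℝ v w = ∑ x, v x * w x := fun v w => by
    simp [PiLp.inner_apply, mul_comm]
  have hbb := orthonormal_iff_ite.1 b.orthonormal
  have hφ : ∀ i j, ∑ x, (G.degree x : ℝ) * ((r x)⁻¹ * b i x * ((r x)⁻¹ * b j x)) =
      if i = j then 1 else 0 := by
    intro i j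
    rw [← hbb i j, hinner]
    refine Finset.sum_congr rfl fun x _ => ?_
    have := hr0 x
    rw [hrr x]
    field_simp
  refine ⟨fun i x => (r x)⁻¹ * b i x, fun i x => ?_, fun i => ?_, fun i j hij => ?_,
    fun u v => ?_⟩
  · have h1 := hb i x
    have h2 : ∑ y, M x y * b i y = (r x)⁻¹ * ∑ y, G.adjMatrix ℝ x y * ((r y)⁻¹ * b i y) := by
      rw [Finset.mul_sum]
      exact Finset.sum_congr rfl fun y _ => by simp only [hMdef, Matrix.of_apply]; ring
    rw [h2] at h1
    have := hr0 x
    rw [hrr x]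
    field_simp at h1 ⊢
    linarith
  · simpa [sq] using hφ i i
  · simpa [hij] using hφ i j
  · have h1 := b.sum_inner_mul_inner (WithLp.toLp 2 fun x => r x * u x)
      (WithLp.toLp 2 fun x => r x * v x)
    simp only [hinner] at h1
    have h2 : ∀ (w : V → ℝ) i, ∑ x, (G.degree x : ℝ) * (w x * ((r x)⁻¹ * b i x)) =
        ∑ x, r x * w x * b i x := fun w i => Finset.sum_congr rfl fun x _ => by
      have := hr0 x
      rw [hrr x]
      field_simp
    simp only [h2]
    calc _ = ∑ x, r x * u x * (r x * v x) := Finset.sum_congr rfl fun x _ => by rw [hrr x]; ring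
      _ = _ := h1.symm
      _ = _ := Finset.sum_congr rfl fun i _ => by
        congr 1
        exact Finset.sum_congr rfl fun x _ => mul_comm _ _

end Spectral

section Coarea

variable {V : Type*} [Fintype V] (G : SimpleGraph V)

lemma vol_mono {S T : Finset V} (h : S ⊆ T) : vol G S ≤ vol G T :=
  Finset.sum_le_sum_of_subset_of_nonneg h fun _ _ _ => Nat.cast_nonneg _

lemma vol_nonneg (S : Finset V) : 0 ≤ vol G S :=
  Finset.sum_nonneg fun _ _ => Nat.cast_nonneg _

lemma bdry_nonneg (S : Finset V) : 0 ≤ bdry G S :=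
  Finset.sum_nonneg fun _ _ => Finset.sum_nonneg fun _ _ => by split_ifs <;> norm_num

lemma cheeger_mul_vol_le_bdry (hpos : ∀ x, 0 < (G.degree x : ℝ)) {S : Finset V}
    (hS : S.Nonempty) (hvol : vol G S ≤ vol G Sᶜ) : cheeger G * vol G S ≤ bdry G S := by
  have h0 : 0 < vol G S := Finset.sum_pos (fun x _ => hpos x) hS
  have hne : S ≠ univ := by
    rintro rfl
    rw [Finset.compl_univ] at hvol
    simp only [vol, Finset.sum_empty] at hvol h0
    linarith
  rw [← le_div_iff₀ h0]
  refine csInf_le ⟨0, ?_⟩ ⟨S, hS, hne, by rw [min_eq_left hvol]⟩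
  rintro x ⟨T, -, -, rfl⟩
  exact div_nonneg (bdry_nonneg G T) (le_min (vol_nonneg G T) (vol_nonneg G Tᶜ))

lemma sum_sum_adj_mul_abs_indicator_sub (S : Finset V) :
    ∑ x, ∑ y, G.adjMatrix ℝ x y * |(if x ∈ S then (1 : ℝ) else 0) - if y ∈ S then 1 else 0| =
      2 * bdry G S := by
  have h1 : ∀ x y, G.adjMatrix ℝ x y * |(if x ∈ S then (1 : ℝ) else 0) - if y ∈ S then 1 else 0| =
      (if x ∈ S then if y ∈ Sᶜ then G.adjMatrix ℝ x y else 0 else 0) +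
        (if y ∈ S then if x ∈ Sᶜ then G.adjMatrix ℝ y x else 0 else 0) := by
    intro x y
    have := G.adj_comm x y
    by_cases hx : x ∈ S <;> by_cases hy : y ∈ S <;> simp [hx, hy, this]
  have h2 : ∑ x, ∑ y, (if x ∈ S then if y ∈ Sᶜ then G.adjMatrix ℝ x y else 0 else 0) =
      bdry G S := by
    have h3 : ∀ x, ∑ y, (if x ∈ S then if y ∈ Sᶜ then G.adjMatrix ℝ x y else 0 else 0) =
        if x ∈ S then ∑ y ∈ Sᶜ, G.adjMatrix ℝ x y else 0 := by
      intro x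
      split_ifs
      · rw [Finset.sum_ite_mem, Finset.univ_inter]
      · exact Finset.sum_const_zero
    simp_rw [h3, Finset.sum_ite_mem, Finset.univ_inter, bdry, SimpleGraph.adjMatrix_apply]
  simp_rw [h1, Finset.sum_add_distrib]
  rw [h2, Finset.sum_comm, h2, two_mul]

/-- Discrete co-area inequality: the `ℓ¹` form of the isoperimetric inequality. -/
lemma cheeger_mul_sum_le (hpos : ∀ x, 0 < (G.degree x : ℝ)) (q : V → ℝ) (hq : ∀ x, 0 ≤ q x)
    (hvol : vol G (univ.filter fun x => 0 < q x) ≤ vol G (univ.filter fun x => 0 < q x)ᶜ) :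
    2 * cheeger G * ∑ x, (G.degree x : ℝ) * q x ≤
      ∑ x, ∑ y, G.adjMatrix ℝ x y * |q x - q y| := by
  induction hk : #(univ.filter fun x => 0 < q x) using Nat.strong_induction_on generalizing q with
  | _ k ih =>
  set T := univ.filter fun x => 0 < q x with hT
  have hmem : ∀ x, x ∈ T ↔ 0 < q x := fun x => by simp [hT]
  rcases T.eq_empty_or_nonempty with h0 | hne
  · have hz : ∀ x, q x = 0 := fun x =>
      le_antisymm (not_lt.1 fun hx => by simpa [h0] using (hmem x).2 hx) (hq x)
    simp [hz]
  obtain ⟨z, hz, hmin⟩ := T.exists_min_image q hne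
  set χ : V → ℝ := fun x => if x ∈ T then 1 else 0 with hχ
  set q' : V → ℝ := fun x => q x - q z * χ x with hq'
  have hqz : 0 < q z := (hmem z).1 hz
  have hzero : ∀ x, x ∉ T → q x = 0 := fun x hx =>
    le_antisymm (not_lt.1 fun h => hx ((hmem x).2 h)) (hq x)
  have hq'0 : ∀ x, 0 ≤ q' x := by
    intro x
    by_cases hx : x ∈ T
    · simpa [hq', hχ, hx] using hmin x hx
    · simp [hq', hχ, hx, hzero x hx]
  have hsub : (univ.filter fun x => 0 < q' x) ⊂ T := by
    refine (Finset.ssubset_iff_of_subset fun x hx => ?_).2 ⟨z, hz, by simp [hq', hχ, hz]⟩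
    by_contra hxT
    simp [hq', hχ, hxT, hzero x hxT] at hx
  have hih := ih _ (hk ▸ Finset.card_lt_card hsub) q' hq'0
    ((vol_mono G hsub.1).trans (hvol.trans (vol_mono G (Finset.compl_subset_compl.2 hsub.1)))) rfl
  have hcut := cheeger_mul_vol_le_bdry G hpos hne hvol
  have habs : ∀ x y, |q x - q y| = |q' x - q' y| + q z * |χ x - χ y| := by
    intro x y
    by_cases hx : x ∈ T <;> by_cases hy : y ∈ T
    · simp [hq', hχ, hx, hy]
    · have := hmin x hx
      simp [hq', hχ, hx, hy, hzero y hy, abs_of_nonneg (hq x), abs_of_nonneg (sub_nonneg.2 this)]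
    · have := hmin y hy
      simp [hq', hχ, hx, hy, hzero x hx, abs_of_nonneg (hq y), abs_sub_comm (q z),
        abs_of_nonneg (sub_nonneg.2 this)]
    · simp [hq', hχ, hx, hy]
  have hsum : ∑ x, (G.degree x : ℝ) * q x = ∑ x, (G.degree x : ℝ) * q' x + q z * vol G T := by
    have h1 : vol G T = ∑ x, (G.degree x : ℝ) * χ x := by simp [vol, hχ]
    rw [h1, Finset.mul_sum, ← Finset.sum_add_distrib]
    exact Finset.sum_congr rfl fun x _ => by simp only [hq']; ring
  have hsplit : ∑ x, ∑ y, G.adjMatrix ℝ x y * |q x - q y| =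
      ∑ x, ∑ y, G.adjMatrix ℝ x y * |q' x - q' y| + q z * (2 * bdry G T) := by
    rw [← sum_sum_adj_mul_abs_indicator_sub, Finset.mul_sum, ← Finset.sum_add_distrib]
    refine Finset.sum_congr rfl fun x _ => ?_
    rw [Finset.mul_sum, ← Finset.sum_add_distrib]
    exact Finset.sum_congr rfl fun y _ => by rw [habs]; ring
  rw [hsum, hsplit]
  nlinarith

/-- `ℓ¹` isoperimetric inequality for functions of mean zero: the positive or the negative part is
supported on at most half of the volume. -/
lemma cheeger_mul_sum_abs_le (hpos : ∀ x, 0 < (G.degree x : ℝ)) (p : V → ℝ)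
    (hp : ∑ x, (G.degree x : ℝ) * p x = 0) :
    cheeger G * ∑ x, (G.degree x : ℝ) * |p x| ≤ ∑ x, ∑ y, G.adjMatrix ℝ x y * |p x - p y| := by
  wlog hvol : vol G (univ.filter fun x => 0 < p x) ≤ vol G (univ.filter fun x => 0 < -p x)
    generalizing p
  · have h1 := this (fun x => -p x) (by simpa using hp) (by simpa using (not_le.1 hvol).le)
    simp only [abs_neg, neg_sub_neg] at h1
    simpa only [abs_sub_comm] using h1
  have hsupp : (univ.filter fun x => 0 < max (p x) 0) = univ.filter fun x => 0 < p x := by simp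
  have h1 := cheeger_mul_sum_le G hpos (fun x => max (p x) 0) (fun x => le_max_right _ _) (by
    rw [hsupp]
    refine hvol.trans (vol_mono G fun x hx => ?_)
    simp at hx ⊢
    exact hx.le)
  have h2 : ∑ x, (G.degree x : ℝ) * |p x| = 2 * ∑ x, (G.degree x : ℝ) * max (p x) 0 := by
    refine Eq.trans ?_ (sub_zero _)
    nth_rewrite 2 [← hp]
    rw [Finset.mul_sum, ← Finset.sum_sub_distrib]
    refine Finset.sum_congr rfl fun x _ => ?_
    rcases le_total (p x) 0 with h | h
    · rw [max_eq_right h, abs_of_nonpos h]; ring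
    · rw [max_eq_left h, abs_of_nonneg h]; ring
  calc _ = 2 * cheeger G * ∑ x, (G.degree x : ℝ) * max (p x) 0 := by rw [h2]; ring
    _ ≤ _ := h1
    _ ≤ _ := Finset.sum_le_sum fun x _ => Finset.sum_le_sum fun y _ =>
      mul_le_mul_of_nonneg_left (abs_max_sub_max_le_abs _ _ _)
        (by rw [SimpleGraph.adjMatrix_apply]; split_ifs <;> norm_num)

end Coarea

/-- The variation of a product of two eigenfunctions. -/
lemma IsEigenbasis.sum_abs_mul_sub_mul_le {V ι : Type*} [Fintype V] [Fintype ι] {a : V → V → ℝ}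
    {d : V → ℝ} {μ : ι → ℝ} {φ : ι → V → ℝ} (h : IsEigenbasis a d μ φ) (ha : ∀ x y, 0 ≤ a x y)
    (hsymm : ∀ x y, a x y = a y x) (hd : ∀ x, ∑ y, a x y = d x) (i j : ι) :
    ∑ x, ∑ y, a x y * |φ i x * φ j x - φ i y * φ j y| ≤
      √2 * (√(1 + μ i) + √(1 + μ j)) := by
  have hcs : ∀ k l, ∑ x, ∑ y, a x y * |(φ k x + 1 * φ k y) * (φ l x + -1 * φ l y)| ≤
      √2 * √(1 + μ k) * 2 := by
    intro k l
    refine (sum_sum_weight_mul_abs_mul_le a _ _ ha).trans ?_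
    rw [h.energy hsymm hd, h.energy hsymm hd, show (1 + 1 ^ 2 + 2 * 1 * μ k) = 2 * (1 + μ k) by ring,
      Real.sqrt_mul zero_le_two]
    refine mul_le_mul_of_nonneg_left (Real.sqrt_le_iff.2 ⟨zero_le_two, ?_⟩) (by positivity)
    linarith [h.one_add_nonneg ha hsymm hd l]
  have hpt : ∑ x, ∑ y, a x y * |φ i x * φ j x - φ i y * φ j y| ≤
      2⁻¹ * (∑ x, ∑ y, a x y * |(φ i x + 1 * φ i y) * (φ j x + -1 * φ j y)| +
        ∑ x, ∑ y, a x y * |(φ j x + 1 * φ j y) * (φ i x + -1 * φ i y)|) := by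
    simp_rw [← Finset.sum_add_distrib, Finset.mul_sum]
    refine Finset.sum_le_sum fun x _ => Finset.sum_le_sum fun y _ => ?_
    have h1 := abs_add_le ((φ i x + 1 * φ i y) * (φ j x + -1 * φ j y))
      ((φ j x + 1 * φ j y) * (φ i x + -1 * φ i y))
    rw [show (φ i x + 1 * φ i y) * (φ j x + -1 * φ j y) +
      (φ j x + 1 * φ j y) * (φ i x + -1 * φ i y) = 2 * (φ i x * φ j x - φ i y * φ j y) by ring,
      abs_mul, abs_two] at h1
    nlinarith [ha x y]
  linarith [hcs i j, hcs j i]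

lemma sqrt_mul_sqrt_lt_of_lt_half {s t : ℝ} (hs : 0 ≤ s) (hst : s ≤ t) (ht : t < 1 / 2) :
    √s * √t < √(1 - s) * √(1 - t) := by
  rw [← Real.sqrt_mul hs, ← Real.sqrt_mul (by linarith)]
  exact Real.sqrt_lt_sqrt (mul_nonneg hs (hs.trans hst)) (by nlinarith)

/-- **Key inequality in the proof of Theorem 1**: for a finite connected graph with
normalized adjacency eigenvalues `μs (n-1) = μₙ ≤ ⋯ ≤ μs 1 = μ₂ ≤ μs 0 = μ₁ = 1`
(listed with multiplicity, in decreasing order, as the roots of the characteristic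
polynomial of `D⁻¹A`) and edge-expansion `h`, if `1 + μ_{n-1} < (1-μ₂)/2`, then
`(√2/2)h ≤ (√(1+μₙ) + √(1+μ_{n-1})) /
  (√(1-(1+μₙ)/(1-μ₂))·√(1-(1+μ_{n-1})/(1-μ₂)) - √((1+μₙ)/(1-μ₂))·√((1+μ_{n-1})/(1-μ₂)))`. -/
theorem cheeger_le_ratio {V : Type*} [Fintype V] (G : SimpleGraph V)
    (hconn : G.Connected) (hn : 2 ≤ Fintype.card V)
    (μs : Fin (Fintype.card V) → ℝ) (hanti : Antitone μs)
    (hchar : (normAdj G).charpoly = ∏ i, (X - C (μs i)))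
    (hμ1 : μs ⟨0, by omega⟩ = 1)
    (hsmall : 1 + μs ⟨Fintype.card V - 2, by omega⟩ < (1 - μs ⟨1, by omega⟩) / 2) :
    Real.sqrt 2 / 2 * cheeger G ≤
      (Real.sqrt (1 + μs ⟨Fintype.card V - 1, by omega⟩) +
        Real.sqrt (1 + μs ⟨Fintype.card V - 2, by omega⟩)) /
      (Real.sqrt (1 - (1 + μs ⟨Fintype.card V - 1, by omega⟩) / (1 - μs ⟨1, by omega⟩)) *
        Real.sqrt (1 - (1 + μs ⟨Fintype.card V - 2, by omega⟩) / (1 - μs ⟨1, by omega⟩)) -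
       Real.sqrt ((1 + μs ⟨Fintype.card V - 1, by omega⟩) / (1 - μs ⟨1, by omega⟩)) *
        Real.sqrt ((1 + μs ⟨Fintype.card V - 2, by omega⟩) / (1 - μs ⟨1, by omega⟩))) := by
  have : Nontrivial V := Fintype.one_lt_card_iff_nontrivial.1 hn
  have hpos : ∀ x, 0 < (G.degree x : ℝ) := fun x =>
    Nat.cast_pos.2 (hconn.preconnected.degree_pos_of_nontrivial x)
  have ha : ∀ x y, 0 ≤ G.adjMatrix ℝ x y := fun x y => by
    rw [SimpleGraph.adjMatrix_apply]
    split_ifs <;> norm_num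
  have hsymm : ∀ x y, G.adjMatrix ℝ x y = G.adjMatrix ℝ y x := fun x y => by
    simp [G.adj_comm x y]
  have hd : ∀ x, ∑ y, G.adjMatrix ℝ x y = (G.degree x : ℝ) := fun x => by
    simp [SimpleGraph.adjMatrix_apply, ← SimpleGraph.card_neighborFinset_eq_degree,
      SimpleGraph.neighborFinset_eq_filter]
  obtain ⟨φ, h⟩ := exists_isEigenbasis G hpos hanti hchar
  have hnonneg := h.one_add_nonneg ha hsymm hd
  have hle : ∀ i, i ≠ (⟨0, by omega⟩ : Fin (Fintype.card V)) → μs i ≤ μs ⟨1, by omega⟩ := by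
    intro i hi
    refine hanti (Fin.mk_le_of_le_val ?_)
    exact Nat.one_le_iff_ne_zero.2 fun h0 => hi (Fin.ext h0)
  set l : Fin (Fintype.card V) := ⟨Fintype.card V - 1, by omega⟩ with hl
  set k : Fin (Fintype.card V) := ⟨Fintype.card V - 2, by omega⟩ with hk
  set m := μs ⟨1, by omega⟩ with hm
  have hlk : μs l ≤ μs k := hanti (Fin.mk_le_mk.2 (by omega))
  have hne : l ≠ k := fun he => by
    have := congrArg Fin.val he
    simp only [hl, hk] at this
    omega
  have hgap : 0 < 1 - m := by linarith [hnonneg k]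
  have hvar := h.variance_abs_le ha hsymm hd hpos hμ1 hle (by linarith)
  have hoverlap := le_sum_mul_of_variance_le hpos (fun x => abs_nonneg (φ l x))
    (fun x => abs_nonneg (φ k x)) (by simpa using h.norm l) (by simpa using h.norm k)
    (hvar l) (hvar k)
  have hden := sqrt_mul_sqrt_lt_of_lt_half (s := (1 + μs l) / (1 - m)) (t := (1 + μs k) / (1 - m))
    (div_nonneg (hnonneg l) hgap.le) (by gcongr) (by rw [div_lt_iff₀ hgap]; linarith)
  have hiso := cheeger_mul_sum_abs_le G hpos (fun x => φ l x * φ k x) (h.orthogonal l k hne)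
  have hvariation := h.sum_abs_mul_sub_mul_le ha hsymm hd l k
  have hcheeger : 0 ≤ cheeger G := by
    refine Real.sInf_nonneg ?_
    rintro x ⟨T, -, -, rfl⟩
    exact div_nonneg (bdry_nonneg G T) (le_min (vol_nonneg G T) (vol_nonneg G Tᶜ))
  simp only [abs_mul] at hiso
  rw [le_div_iff₀ (sub_pos.2 hden)]
  have hmain := (mul_le_mul_of_nonneg_left hoverlap hcheeger).trans (hiso.trans hvariation)
  have hsqrt : √2 * √2 = (2 : ℝ) := Real.mul_self_sqrt zero_le_two
  have := mul_le_mul_of_nonneg_left hmain (show 0 ≤ √2 / 2 by positivity)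
  linear_combination this + (√(1 + μs l) + √(1 + μs k)) / 2 * hsqrt

end
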